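/- arXiv:2204.06686 — 3 statements merged into one kernel-verified Lean document; each statement's English description precedes it below -/
import Mathlib

section
/- For any K > 0 there are constants c, δ > 0 such that the following holds for all n ≥ 2. Suppose f : {0,1}^n → {0,1} satisfies max_{i∈[n]} I_i[f] ≤ K · var(f) · (log n)/n. Then Pr_x[√(s_f(x)) ≥ c · var(f) · √(log n)] ≥ δ · var(f). -/
open Finset

noncomputable section

/-- Expectation over the uniform distribution on `{0,1}^n`. -/
def hcExp (n : ℕ) (g : (Fin n → Bool) → ℝ) : ℝ :=
  (∑ x : Fin n → Bool, g x) / 2 ^ n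

/-- Flip the `i`-th coordinate of `x`. -/
def hcFlip {n : ℕ} (x : Fin n → Bool) (i : Fin n) : Fin n → Bool :=
  Function.update x i (!(x i))

/-- Sensitivity of `f` at `x`. -/
def sens {n : ℕ} (f : (Fin n → Bool) → Bool) (x : Fin n → Bool) : ℕ :=
  (Finset.univ.filter fun i => f (hcFlip x i) ≠ f x).card

/-- `f` with values in `{0,1} ⊆ ℝ`. -/
def toReal {n : ℕ} (f : (Fin n → Bool) → Bool) : (Fin n → Bool) → ℝ :=
  fun x => if f x then 1 else 0

/-- Variance of a Boolean function. -/
def hcVar (n : ℕ) (f : (Fin n → Bool) → Bool) : ℝ :=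
  hcExp n (toReal f) - (hcExp n (toReal f)) ^ 2

/-- Influence of coordinate `i`. -/
def influence (n : ℕ) (f : (Fin n → Bool) → Bool) (i : Fin n) : ℝ :=
  hcExp n (fun x => if f (hcFlip x i) = f x then 0 else 1)

/-- Fourier character. -/
def chi {n : ℕ} (S : Finset (Fin n)) (x : Fin n → Bool) : ℝ :=
  ∏ i ∈ S, (if x i then (-1 : ℝ) else 1)

/-- Fourier coefficient of `g` at `S`. -/
def fcoef (n : ℕ) (g : (Fin n → Bool) → ℝ) (S : Finset (Fin n)) : ℝ :=
  hcExp n (fun x => g x * chi S x)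

/-- Derivative of `g` along coordinate `i`. -/
def derivOn {n : ℕ} (g : (Fin n → Bool) → ℝ) (i : Fin n) (x : Fin n → Bool) : ℝ :=
  g (Function.update x i false) - g (Function.update x i true)

/-- Euclidean norm of the gradient of `g` at `x`. -/
def gradNorm2 {n : ℕ} (g : (Fin n → Bool) → ℝ) (x : Fin n → Bool) : ℝ :=
  Real.sqrt (∑ i, (derivOn g i x) ^ 2)

/-- `ℓ_p` norm of the gradient of `g` at `x`. -/
def gradNormP {n : ℕ} (p : ℝ) (g : (Fin n → Bool) → ℝ) (x : Fin n → Bool) : ℝ :=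
  (∑ i, |derivOn g i x| ^ p) ^ (1 / p)

/-- Fourier weight at exactly level `d`. -/
def wEq (n : ℕ) (g : (Fin n → Bool) → ℝ) (d : ℕ) : ℝ :=
  ∑ S ∈ Finset.univ.filter (fun S : Finset (Fin n) => S.card = d), (fcoef n g S) ^ 2

/-- Approximate level-`d` Fourier weight: levels in `[d, 2d)`. -/
def wApprox (n : ℕ) (g : (Fin n → Bool) → ℝ) (d : ℕ) : ℝ :=
  ∑ S ∈ Finset.univ.filter (fun S : Finset (Fin n) => d ≤ S.card ∧ S.card < 2 * d),
    (fcoef n g S) ^ 2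

/-- Fourier weight at levels `≥ d`. -/
def wGe (n : ℕ) (g : (Fin n → Bool) → ℝ) (d : ℕ) : ℝ :=
  ∑ S ∈ Finset.univ.filter (fun S : Finset (Fin n) => d ≤ S.card), (fcoef n g S) ^ 2


lemma hcE_mono {n : ℕ} {g h : (Fin n → Bool) → ℝ} (H : ∀ x, g x ≤ h x) :
    hcExp n g ≤ hcExp n h := by
  unfold hcExp
  gcongr with x _
  exact H x

lemma hcE_add {n : ℕ} (g h : (Fin n → Bool) → ℝ) :
    hcExp n (fun x => g x + h x) = hcExp n g + hcExp n h := by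
  simp only [hcExp, Finset.sum_add_distrib, add_div]

lemma hcE_smul {n : ℕ} (c : ℝ) (g : (Fin n → Bool) → ℝ) :
    hcExp n (fun x => c * g x) = c * hcExp n g := by
  simp only [hcExp, ← Finset.mul_sum, mul_div_assoc]

lemma hcE_sum {n : ℕ} {ι : Type*} (s : Finset ι) (g : ι → (Fin n → Bool) → ℝ) :
    hcExp n (fun x => ∑ i ∈ s, g i x) = ∑ i ∈ s, hcExp n (g i) := by
  simp only [hcExp]
  rw [Finset.sum_comm, Finset.sum_div]

lemma hcE_const {n : ℕ} (c : ℝ) : hcExp n (fun _ => c) = c := by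
  simp [hcExp]

lemma hcE_nonneg {n : ℕ} {g : (Fin n → Bool) → ℝ} (H : ∀ x, 0 ≤ g x) : 0 ≤ hcExp n g := by
  unfold hcExp
  exact div_nonneg (Finset.sum_nonneg fun x _ => H x) (by positivity)

lemma hcE_cs {n : ℕ} (g h : (Fin n → Bool) → ℝ) :
    (hcExp n (fun x => g x * h x)) ^ 2 ≤ hcExp n (fun x => g x ^ 2) * hcExp n (fun x => h x ^ 2) := by
  unfold hcExp
  have := Finset.sum_mul_sq_le_sq_mul_sq Finset.univ g h
  rw [div_pow, div_mul_div_comm, ← pow_two]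
  gcongr

lemma hcFlip_flip {n : ℕ} (x : Fin n → Bool) (i : Fin n) : hcFlip (hcFlip x i) i = x := by
  simp [hcFlip]

lemma hcE_flip {n : ℕ} (i : Fin n) (g : (Fin n → Bool) → ℝ) :
    hcExp n (fun x => g (hcFlip x i)) = hcExp n g := by
  unfold hcExp
  congr 1
  exact Equiv.sum_comp (Function.Involutive.toPerm (fun x : Fin n → Bool => hcFlip x i)
    (fun x => hcFlip_flip x i)) g

def sg {n : ℕ} (i : Fin n) (x : Fin n → Bool) : ℝ := if x i then (-1 : ℝ) else 1

lemma sg_sq {n : ℕ} (i : Fin n) (x : Fin n → Bool) : sg i x * sg i x = 1 := by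
  unfold sg; split_ifs <;> norm_num

lemma sg_abs {n : ℕ} (i : Fin n) (x : Fin n → Bool) : |sg i x| = 1 := by
  unfold sg; split_ifs <;> norm_num

lemma sg_flip {n : ℕ} (i : Fin n) (x : Fin n → Bool) : sg i (hcFlip x i) = - sg i x := by
  unfold sg hcFlip; cases h : x i <;> simp

lemma chi_eq {n : ℕ} (S : Finset (Fin n)) (x : Fin n → Bool) : chi S x = ∏ i ∈ S, sg i x := rfl

lemma chi_empty {n : ℕ} (x : Fin n → Bool) : chi ∅ x = 1 := by simp [chi]

lemma chi_single {n : ℕ} (i : Fin n) (x : Fin n → Bool) : chi {i} x = sg i x := by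
  simp [chi_eq]

lemma chi_insert {n : ℕ} {S : Finset (Fin n)} {i : Fin n} (h : i ∉ S) (x : Fin n → Bool) :
    chi (insert i S) x = sg i x * chi S x := by
  simp only [chi_eq, Finset.prod_insert h]

lemma chi_flip {n : ℕ} {S : Finset (Fin n)} {i : Fin n} (h : i ∉ S) (x : Fin n → Bool) :
    chi S (hcFlip x i) = chi S x := by
  unfold chi
  refine Finset.prod_congr rfl fun j hj => ?_
  have : j ≠ i := fun e => h (e ▸ hj)
  simp [hcFlip, Function.update_of_ne this]

lemma chi_flip' {n : ℕ} {S : Finset (Fin n)} {i : Fin n} (h : i ∈ S) (x : Fin n → Bool) :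
    chi S (hcFlip x i) = - chi S x := by
  have h2 : i ∉ S.erase i := by simp
  rw [← Finset.insert_erase h, chi_insert h2, chi_insert h2, chi_flip h2, sg_flip]
  ring

lemma chi_sq {n : ℕ} (S : Finset (Fin n)) (x : Fin n → Bool) : chi S x * chi S x = 1 := by
  simp only [chi_eq, ← Finset.prod_mul_distrib, sg_sq, Finset.prod_const_one]

/-- if `g` is odd under flip then mean zero -/
lemma hcE_odd {n : ℕ} (i : Fin n) (g : (Fin n → Bool) → ℝ) (h : ∀ x, g (hcFlip x i) = - g x) :
    hcExp n g = 0 := by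
  have h1 := hcE_flip i g
  have h2 : hcExp n (fun x => g (hcFlip x i)) = - hcExp n g := by
    simp only [h]
    have := hcE_smul (-1) g
    simpa using this
  linarith

lemma chi_orth {n : ℕ} (S T : Finset (Fin n)) :
    hcExp n (fun x => chi S x * chi T x) = if S = T then 1 else 0 := by
  split_ifs with h
  · subst h
    simp only [chi_sq, hcE_const]
  · have : ∃ i, ¬ (i ∈ S ↔ i ∈ T) := by
      by_contra hh
      push Not at hh
      exact h (Finset.ext hh)
    obtain ⟨i, hi⟩ := this
    apply hcE_odd i
    intro x
    by_cases h1 : i ∈ S <;> by_cases h2 : i ∈ T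
    · tauto
    · rw [chi_flip' h1, chi_flip h2]; ring
    · rw [chi_flip h1, chi_flip' h2]; ring
    · tauto

/-- noise kernel (density) -/
def ker {n : ℕ} (r : ℝ) (x y : Fin n → Bool) : ℝ := ∏ i, (1 + r * (sg i x * sg i y))

lemma ker_eq {n : ℕ} (r : ℝ) (x y : Fin n → Bool) :
    ker r x y = ∑ S : Finset (Fin n), r ^ S.card * (chi S x * chi S y) := by
  unfold ker
  rw [Finset.prod_one_add]
  simp only [Finset.powerset_univ, chi_eq, Finset.prod_mul_distrib, Finset.prod_const]

lemma ker_nonneg {n : ℕ} {r : ℝ} (h0 : 0 ≤ r) (h1 : r ≤ 1) (x y : Fin n → Bool) :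
    0 ≤ ker r x y := by
  refine Finset.prod_nonneg fun i _ => ?_
  have : |sg i x * sg i y| = 1 := by rw [abs_mul, sg_abs, sg_abs]; norm_num
  have := neg_abs_le (sg i x * sg i y)
  nlinarith

lemma ker_one {n : ℕ} (x y : Fin n → Bool) :
    ker 1 x y = if x = y then 2 ^ n else 0 := by
  split_ifs with h
  · subst h
    simp [ker, sg_sq]
    norm_num
  · have : ∃ i, x i ≠ y i := by
      by_contra hh
      push Not at hh
      exact h (funext hh)
    obtain ⟨i, hi⟩ := this
    refine Finset.prod_eq_zero (Finset.mem_univ i) ?_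
    unfold sg
    cases h1 : x i <;> cases h2 : y i <;> simp_all

/-- noise operator -/
def noise {n : ℕ} (r : ℝ) (g : (Fin n → Bool) → ℝ) (x : Fin n → Bool) : ℝ :=
  ∑ S : Finset (Fin n), r ^ S.card * fcoef n g S * chi S x

lemma noise_ker {n : ℕ} (r : ℝ) (g : (Fin n → Bool) → ℝ) (x : Fin n → Bool) :
    noise r g x = hcExp n (fun y => ker r x y * g y) := by
  simp only [ker_eq, Finset.sum_mul]
  rw [hcE_sum]
  unfold noise fcoef
  refine Finset.sum_congr rfl fun S _ => ?_
  rw [mul_right_comm, ← hcE_smul]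
  congr 1; ext y; ring

lemma fourier_inv {n : ℕ} (g : (Fin n → Bool) → ℝ) (x : Fin n → Bool) :
    g x = ∑ S : Finset (Fin n), fcoef n g S * chi S x := by
  have h := noise_ker 1 g x
  simp only [ker_one] at h
  unfold noise at h
  simp only [one_pow, one_mul] at h
  rw [h]
  simp [hcExp]

lemma hcE_mul_fourier {n : ℕ} (g : (Fin n → Bool) → ℝ) (c : Finset (Fin n) → ℝ) :
    hcExp n (fun x => g x * ∑ S : Finset (Fin n), c S * chi S x)
      = ∑ S : Finset (Fin n), c S * fcoef n g S := by
  simp only [Finset.mul_sum]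
  rw [hcE_sum]
  refine Finset.sum_congr rfl fun S _ => ?_
  unfold fcoef
  rw [← hcE_smul]
  congr 1; ext y; ring

lemma parseval {n : ℕ} (g : (Fin n → Bool) → ℝ) :
    hcExp n (fun x => g x ^ 2) = ∑ S : Finset (Fin n), fcoef n g S ^ 2 := by
  have h := hcE_mul_fourier g (fcoef n g)
  simp only [← fourier_inv] at h
  simp only [pow_two, h]

lemma noise_inner {n : ℕ} (r : ℝ) (g : (Fin n → Bool) → ℝ) :
    hcExp n (fun x => g x * noise r g x) = ∑ S : Finset (Fin n), r ^ S.card * fcoef n g S ^ 2 := by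
  unfold noise
  rw [hcE_mul_fourier]
  refine Finset.sum_congr rfl fun S _ => ?_
  ring

lemma fcoef_chi {n : ℕ} (S T : Finset (Fin n)) : fcoef n (chi S) T = if S = T then 1 else 0 :=
  chi_orth S T

lemma noise_chi {n : ℕ} (r : ℝ) (S : Finset (Fin n)) (x : Fin n → Bool) :
    noise r (chi S) x = r ^ S.card * chi S x := by
  simp [noise, fcoef_chi]

/-- splitting a sum over all sets -/
lemma sum_split {n : ℕ} (i : Fin n) (F : Finset (Fin n) → ℝ) :
    ∑ S : Finset (Fin n), F S = ∑ S : Finset (Fin n), if i ∈ S then 0 else F S + F (insert i S) := by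
  have h : (Finset.univ : Finset (Fin n)) = insert i (Finset.univ.erase i) := by simp
  have hn : i ∉ (Finset.univ.erase i : Finset (Fin n)) := by simp
  rw [← Finset.powerset_univ, h, Finset.sum_powerset_insert hn, Finset.sum_powerset_insert hn]
  have h2 : ∀ S ∈ (Finset.univ.erase i : Finset (Fin n)).powerset, i ∉ S := by
    intro S hS hi
    exact hn (Finset.mem_powerset.1 hS hi)
  rw [← Finset.sum_add_distrib, ← Finset.sum_add_distrib]
  refine Finset.sum_congr rfl fun S hS => ?_
  simp [h2 S hS]

/-- Fourier coefficients of derivative -/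
lemma fcoef_deriv {n : ℕ} (g : (Fin n → Bool) → ℝ) (i : Fin n) (T : Finset (Fin n)) :
    fcoef n (derivOn g i) T = if i ∈ T then 0 else 2 * fcoef n g (insert i T) := by
  have key : ∀ x, derivOn g i x = sg i x * g x - sg i x * g (hcFlip x i) := by
    intro x
    unfold derivOn sg hcFlip
    cases h : x i
    · have : Function.update x i false = x := by rw [← h]; simp
      simp [this]
    · have : Function.update x i true = x := by rw [← h]; simp
      simp [this]; ring
  split_ifs with hi
  · apply hcE_odd i
    intro x
    rw [chi_flip' hi, key, key, hcFlip_flip, sg_flip]; ring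
  · have h1 := hcE_flip i (fun x => sg i x * g x * chi T x)
    simp only [chi_flip hi, sg_flip] at h1
    unfold fcoef
    simp only [chi_insert hi, key]
    have h2 := hcE_add (fun x => sg i x * g x * chi T x)
      (fun x => -sg i x * g (hcFlip x i) * chi T x)
    rw [h1] at h2
    have h3 : (fun x => (sg i x * g x - sg i x * g (hcFlip x i)) * chi T x) =
      (fun x => sg i x * g x * chi T x + -sg i x * g (hcFlip x i) * chi T x) := by
      ext x; ring
    rw [h3, h2, two_mul]
    have h4 : (fun x => sg i x * g x * chi T x) = (fun x => g x * (sg i x * chi T x)) := by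
      ext x; ring
    rw [h4]

/-- derivative of noise via biased first-level coefficient -/
lemma noise_deriv {n : ℕ} (r : ℝ) (g : (Fin n → Bool) → ℝ) (i : Fin n) (x : Fin n → Bool) :
    2 * hcExp n (fun y => ker r x y * g y * (sg i y - r * sg i x))
      = (1 - r ^ 2) * noise r (derivOn g i) x := by
  have h1 : hcExp n (fun y => ker r x y * g y * (sg i y - r * sg i x))
      = ∑ S : Finset (Fin n), r ^ S.card * chi S x *
          (hcExp n (fun y => g y * (chi S y * sg i y)) - r * sg i x * fcoef n g S) := by
    simp only [ker_eq, Finset.sum_mul]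
    rw [hcE_sum]
    refine Finset.sum_congr rfl fun S _ => ?_
    unfold fcoef
    rw [mul_sub, ← hcE_smul, ← hcE_smul, ← hcE_smul, sub_eq_add_neg, ← neg_one_mul, ← hcE_smul,
      ← hcE_add]
    congr 1; ext y; ring
  rw [h1, sum_split i]
  unfold noise
  rw [Finset.mul_sum, Finset.mul_sum]
  refine Finset.sum_congr rfl fun S _ => ?_
  rw [fcoef_deriv]
  split_ifs with hi
  · ring
  · rw [Finset.card_insert_of_notMem hi, chi_insert hi]
    have e1 : hcExp n (fun y => g y * (chi S y * sg i y)) = fcoef n g (insert i S) := by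
      unfold fcoef
      simp only [chi_insert hi, mul_comm]
    have e2 : hcExp n (fun y => g y * (chi (insert i S) y * sg i y)) = fcoef n g S := by
      unfold fcoef
      congr 1; ext y
      rw [chi_insert hi]
      linear_combination (g y * chi S y) * sg_sq i y
    rw [e1, e2]
    linear_combination (-2 * r ^ (S.card + 2) * chi S x * fcoef n g (insert i S)) * sg_sq i x
lemma ker_mean {n : ℕ} (r : ℝ) (x : Fin n → Bool) : hcExp n (fun y => ker r x y) = 1 := by
  have h := noise_chi r ∅ x
  rw [noise_ker] at h
  simpa [chi_empty] using h

lemma ker_sg {n : ℕ} (r : ℝ) (x : Fin n → Bool) (i : Fin n) :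
    hcExp n (fun y => ker r x y * sg i y) = r * sg i x := by
  have h := noise_chi r {i} x
  rw [noise_ker] at h
  simpa [chi_single] using h

lemma ker_sg2 {n : ℕ} (r : ℝ) (x : Fin n → Bool) {i j : Fin n} (hij : i ≠ j) :
    hcExp n (fun y => ker r x y * (sg i y * sg j y)) = r ^ 2 * (sg i x * sg j x) := by
  have hi : i ∉ ({j} : Finset (Fin n)) := by simpa using hij
  have h := noise_chi r (insert i {j}) x
  rw [noise_ker, Finset.card_insert_of_notMem hi] at h
  simpa [chi_insert hi, chi_single] using h

lemma ker_cov {n : ℕ} (r : ℝ) (x : Fin n → Bool) (i j : Fin n) :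
    hcExp n (fun y => ker r x y * ((sg i y - r * sg i x) * (sg j y - r * sg j x)))
      = if i = j then 1 - r ^ 2 else 0 := by
  have e : (fun y => ker r x y * ((sg i y - r * sg i x) * (sg j y - r * sg j x))) =
    (fun y => ((ker r x y * (sg i y * sg j y) + (-(r * sg i x)) * (ker r x y * sg j y)) +
      (-(r * sg j x)) * (ker r x y * sg i y)) + (r ^ 2 * (sg i x * sg j x)) * ker r x y) := by
    ext y; ring
  rw [e, hcE_add, hcE_add, hcE_add, hcE_smul, hcE_smul, hcE_smul, ker_sg, ker_sg, ker_mean]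
  split_ifs with h
  · subst h
    simp only [sg_sq, mul_one, ker_mean]
    linear_combination (-2 * r ^ 2) * sg_sq i x
  · rw [ker_sg2 r x h]; ring

lemma grad_noise {n : ℕ} {r : ℝ} (h0 : 0 ≤ r) (h1 : r < 1) (g : (Fin n → Bool) → ℝ)
    (hg : ∀ x, g x ^ 2 ≤ 1) (x : Fin n → Bool) :
    ∑ i, (noise r (derivOn g i) x) ^ 2 ≤ 4 / (1 - r ^ 2) := by
  have hv : 0 < 1 - r ^ 2 := by nlinarith
  set t : Fin n → ℝ := fun i => noise r (derivOn g i) x / 2 with ht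
  have hu : ∀ i, hcExp n (fun y => ker r x y * g y * (sg i y - r * sg i x)) = (1 - r ^ 2) * t i := by
    intro i
    have := noise_deriv r g i x
    simp only [ht]
    linarith
  have hpos : 0 ≤ hcExp n (fun y => ker r x y * (g y - ∑ i, t i * (sg i y - r * sg i x)) ^ 2) :=
    hcE_nonneg fun y => mul_nonneg (ker_nonneg h0 h1.le x y) (sq_nonneg _)
  have e : (fun y => ker r x y * (g y - ∑ i, t i * (sg i y - r * sg i x)) ^ 2) =
     (fun y => (ker r x y * g y ^ 2 +
      (-2) * ∑ i, t i * (ker r x y * g y * (sg i y - r * sg i x))) +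
      ∑ i, ∑ j, (t i * t j) * (ker r x y * ((sg i y - r * sg i x) * (sg j y - r * sg j x)))) := by
    ext y
    have e1 : ∑ i, t i * (ker r x y * g y * (sg i y - r * sg i x)) =
      ker r x y * g y * ∑ i, t i * (sg i y - r * sg i x) := by
      rw [Finset.mul_sum]; exact Finset.sum_congr rfl fun i _ => by ring
    have e2 : ∑ i, ∑ j, (t i * t j) * (ker r x y * ((sg i y - r * sg i x) * (sg j y - r * sg j x)))
      = ker r x y * ((∑ i, t i * (sg i y - r * sg i x)) * (∑ j, t j * (sg j y - r * sg j x))) := by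
      rw [Finset.sum_mul_sum, Finset.mul_sum]
      refine Finset.sum_congr rfl fun i _ => ?_
      rw [Finset.mul_sum]
      exact Finset.sum_congr rfl fun j _ => by ring
    rw [e1, e2]; ring
  rw [e, hcE_add, hcE_add, hcE_smul, hcE_sum, hcE_sum] at hpos
  simp only [hcE_sum, hcE_smul, hu, ker_cov] at hpos
  have hg2 : hcExp n (fun y => ker r x y * g y ^ 2) ≤ 1 := by
    rw [← ker_mean r x]
    exact hcE_mono fun y => mul_le_of_le_one_right (ker_nonneg h0 h1.le x y) (hg y)
  have e3 : ∑ i, ∑ j, t i * t j * (if i = j then 1 - r ^ 2 else 0) = (1 - r ^ 2) * ∑ i, t i ^ 2 := by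
    rw [Finset.mul_sum]
    refine Finset.sum_congr rfl fun i _ => ?_
    simp; ring
  have e4 : ∑ i, t i * ((1 - r ^ 2) * t i) = (1 - r ^ 2) * ∑ i, t i ^ 2 := by
    rw [Finset.mul_sum]
    exact Finset.sum_congr rfl fun i _ => by ring
  rw [e3, e4] at hpos
  have e5 : ∑ i, (noise r (derivOn g i) x) ^ 2 = 4 * ∑ i, t i ^ 2 := by
    rw [Finset.mul_sum]
    refine Finset.sum_congr rfl fun i _ => ?_
    simp only [ht]; ring
  rw [e5, le_div_iff₀ hv]
  linarith

/-- facts on Boolean derivative -/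
lemma deriv_sq {n : ℕ} (f : (Fin n → Bool) → Bool) (i : Fin n) (x : Fin n → Bool) :
    derivOn (toReal f) i x ^ 2 = if f (hcFlip x i) = f x then 0 else 1 := by
  unfold derivOn toReal hcFlip
  cases h : x i
  · have : Function.update x i false = x := by rw [← h]; simp
    simp only [this, Bool.not_false]
    cases f x <;> cases f (Function.update x i true) <;> simp
  · have : Function.update x i true = x := by rw [← h]; simp
    simp only [this, Bool.not_true]
    cases f x <;> cases f (Function.update x i false) <;> simp

lemma bderiv_sum {n : ℕ} (f : (Fin n → Bool) → Bool) (x : Fin n → Bool) :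
    ∑ i, derivOn (toReal f) i x ^ 2 = sens f x := by
  simp only [deriv_sq, sens, Finset.card_filter]
  push_cast
  refine Finset.sum_congr rfl fun i _ => ?_
  split_ifs <;> simp_all

lemma infl_eq {n : ℕ} (f : (Fin n → Bool) → Bool) (i : Fin n) :
    influence n f i = hcExp n (fun x => derivOn (toReal f) i x ^ 2) := by
  simp only [deriv_sq]; rfl

lemma sens_mean {n : ℕ} (f : (Fin n → Bool) → Bool) :
    hcExp n (fun x => (sens f x : ℝ)) = ∑ i, influence n f i := by
  simp only [← bderiv_sum, infl_eq, hcE_sum]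

/-- total weighted derivative weights -/
lemma deriv_weight {n : ℕ} (g : (Fin n → Bool) → ℝ) (r : ℝ) :
    ∑ i, ∑ T : Finset (Fin n), r ^ T.card * fcoef n (derivOn g i) T ^ 2
      = 4 * ∑ S : Finset (Fin n), (S.card : ℝ) * r ^ (S.card - 1) * fcoef n g S ^ 2 := by
  have h : ∀ i : Fin n, ∑ T : Finset (Fin n), r ^ T.card * fcoef n (derivOn g i) T ^ 2 =
      ∑ S : Finset (Fin n), if i ∈ S then 4 * (r ^ (S.card - 1) * fcoef n g S ^ 2) else 0 := by
    intro i
    rw [sum_split i (fun S => if i ∈ S then 4 * (r ^ (S.card - 1) * fcoef n g S ^ 2) else 0)]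
    refine Finset.sum_congr rfl fun S _ => ?_
    rw [fcoef_deriv]
    split_ifs with h1 h2 h2
    · simp
    · rw [Finset.card_insert_of_notMem h1, Nat.add_sub_cancel]; ring
    · simp at h2
  simp only [h]
  rw [Finset.sum_comm, Finset.mul_sum]
  refine Finset.sum_congr rfl fun S _ => ?_
  simp
  ring

/-- key gradient estimate -/
lemma key_bound {n : ℕ} {r : ℝ} (h0 : 0 ≤ r) (h1 : r < 1) (f : (Fin n → Bool) → Bool) :
    ∑ S : Finset (Fin n), (S.card : ℝ) * r ^ (S.card - 1) * fcoef n (toReal f) S ^ 2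
      ≤ hcExp n (fun x => Real.sqrt (sens f x)) * (1 / (2 * Real.sqrt (1 - r))) := by
  have hr : 0 < Real.sqrt (1 - r) := Real.sqrt_pos.2 (by linarith)
  have hd := deriv_weight (toReal f) r
  simp only [← noise_inner] at hd
  rw [← hcE_sum] at hd
  have hb : hcExp n (fun x => ∑ i, derivOn (toReal f) i x * noise r (derivOn (toReal f) i) x)
      ≤ hcExp n (fun x => (2 / Real.sqrt (1 - r)) * Real.sqrt (sens f x)) := by
    refine hcE_mono fun x => ?_
    refine (Real.sum_mul_le_sqrt_mul_sqrt _ _ _).trans ?_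
    rw [bderiv_sum, mul_comm]
    gcongr
    have := grad_noise h0 h1 (toReal f) (fun y => by unfold toReal; split_ifs <;> norm_num) x
    rw [Real.sqrt_le_left (by positivity), div_pow, Real.sq_sqrt (by linarith)]
    refine this.trans ?_
    norm_num
    have : 0 < 1 - r := by linarith
    gcongr
    nlinarith
  rw [hcE_smul] at hb
  have e : hcExp n (fun x => Real.sqrt (sens f x)) * (1 / (2 * Real.sqrt (1 - r))) =
    (2 / Real.sqrt (1 - r) * hcExp n (fun x => Real.sqrt (sens f x))) / 4 := by
    field_simp; norm_num
  rw [e]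
  linarith

lemma stab_bound {n : ℕ} {r : ℝ} (h0 : 0 ≤ r) (h1 : r ≤ 1) (f : (Fin n → Bool) → Bool) :
    ∑ S : Finset (Fin n), (1 - r ^ S.card) * fcoef n (toReal f) S ^ 2
      ≤ hcExp n (fun x => Real.sqrt (sens f x)) * Real.sqrt (1 - r) := by
  set A := hcExp n (fun x => Real.sqrt (sens f x)) with hA
  set ψ : ℝ → ℝ := fun r => -(A * Real.sqrt (1 - r)) -
    ∑ S : Finset (Fin n), r ^ S.card * fcoef n (toReal f) S ^ 2 with hψ
  have hmono : MonotoneOn ψ (Set.Icc 0 1) := by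
    have hder : ∀ s ∈ interior (Set.Icc (0:ℝ) 1), HasDerivAt ψ (-(A * (-1 / (2 * Real.sqrt (1 - s)))) -
        ∑ S : Finset (Fin n), ((S.card : ℝ) * s ^ (S.card - 1)) * fcoef n (toReal f) S ^ 2) s := by
      intro s hs
      rw [interior_Icc] at hs
      have a1 : HasDerivAt (fun r : ℝ => Real.sqrt (1 - r)) (-1 / (2 * Real.sqrt (1 - s))) s := by
        have : HasDerivAt (fun r : ℝ => 1 - r) (-1) s := by
          simpa using (hasDerivAt_id s).const_sub 1
        exact this.sqrt (by linarith [hs.2])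
      refine ((a1.const_mul A).neg).sub ?_
      have : HasDerivAt (fun r : ℝ => ∑ S : Finset (Fin n), r ^ S.card * fcoef n (toReal f) S ^ 2)
        (∑ S : Finset (Fin n), ((S.card : ℝ) * s ^ (S.card - 1)) * fcoef n (toReal f) S ^ 2) s := by
        refine HasDerivAt.fun_sum fun S _ => ?_
        exact (hasDerivAt_pow _ _).mul_const _
      exact this
    refine monotoneOn_of_deriv_nonneg (convex_Icc 0 1) ?_ ?_ ?_
    · apply Continuous.continuousOn
      simp only [hψ]
      fun_prop
    · intro s hs
      exact (hder s hs).differentiableAt.differentiableWithinAt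
    · intro s hs
      rw [(hder s hs).deriv]
      rw [interior_Icc] at hs
      have := key_bound hs.1.le hs.2 f
      rw [← hA] at this
      have e : -(A * (-1 / (2 * Real.sqrt (1 - s)))) = A * (1 / (2 * Real.sqrt (1 - s))) := by ring
      rw [e]; linarith
  have := hmono ⟨h0, h1⟩ (Set.right_mem_Icc.2 zero_le_one) h1
  simp only [hψ] at this
  simp only [sub_mul, Finset.sum_sub_distrib]
  simp at this ⊢
  linarith

/-- hypercontractivity, (2,4) form -/
lemma hyper {n : ℕ} {r : ℝ} (hr : r ^ 2 = 1 / 3) (J : Finset (Fin n)) :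
    ∀ b : Finset (Fin n) → ℝ,
    hcExp n (fun x => (∑ S ∈ J.powerset, r ^ S.card * b S * chi S x) ^ 4)
      ≤ (∑ S ∈ J.powerset, b S ^ 2) ^ 2 := by
  induction J using Finset.induction_on with
  | empty =>
    intro b
    simp [chi_empty, hcE_const]
    apply le_of_eq; ring
  | insert j J hj ih =>
    intro b
    set P : (Fin n → Bool) → ℝ := fun x => ∑ S ∈ J.powerset, r ^ S.card * b S * chi S x with hP
    set Q : (Fin n → Bool) → ℝ := fun x => ∑ S ∈ J.powerset, r ^ S.card * b (insert j S) * chi S x with hQ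
    have hnot : ∀ S ∈ J.powerset, j ∉ S := fun S hS h => hj (Finset.mem_powerset.1 hS h)
    have hp := ih b
    have hq := ih (fun S => b (insert j S))
    have e : ∀ x, ∑ S ∈ (insert j J).powerset, r ^ S.card * b S * chi S x = P x + r * (sg j x * Q x) := by
      intro x
      rw [Finset.sum_powerset_insert hj]
      congr 1
      simp only [hQ, Finset.mul_sum]
      refine Finset.sum_congr rfl fun S hS => ?_
      rw [Finset.card_insert_of_notMem (hnot S hS), chi_insert (hnot S hS)]
      ring
    have hPf : ∀ x, P (hcFlip x j) = P x := fun x =>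
      Finset.sum_congr rfl fun S hS => by rw [chi_flip (hnot S hS)]
    have hQf : ∀ x, Q (hcFlip x j) = Q x := fun x =>
      Finset.sum_congr rfl fun S hS => by rw [chi_flip (hnot S hS)]
    simp only [e]
    rw [Finset.sum_powerset_insert hj]
    have e2 : (fun x => (P x + r * (sg j x * Q x)) ^ 4) = (fun x =>
        ((P x ^ 4 + 2 * (P x ^ 2 * Q x ^ 2)) + (1 / 9) * Q x ^ 4) +
        (sg j x * (4 * r * P x ^ 3 * Q x + 4 * r ^ 3 * P x * Q x ^ 3))) := by
      ext x
      have hs : sg j x ^ 2 = 1 := by rw [pow_two, sg_sq]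
      have h3 : sg j x ^ 3 = sg j x := by rw [pow_succ, hs, one_mul]
      have h4 : sg j x ^ 4 = 1 := by rw [show 4 = 2 * 2 from rfl, pow_mul, hs, one_pow]
      have r4 : r ^ 4 = 1 / 9 := by rw [show 4 = 2 * 2 from rfl, pow_mul, hr]; norm_num
      ring_nf
      rw [hs, h3, h4, hr, r4]
      ring
    rw [e2, hcE_add, hcE_add, hcE_add, hcE_smul, hcE_smul]
    rw [hcE_odd j (fun x => sg j x * (4 * r * P x ^ 3 * Q x + 4 * r ^ 3 * P x * Q x ^ 3))
      (fun x => by rw [hPf, hQf, sg_flip]; ring)]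
    have hcs := hcE_cs (fun x => P x ^ 2) (fun x => Q x ^ 2)
    have e3 : ∀ a : ℝ, (a ^ 2) ^ 2 = a ^ 4 := fun a => by ring
    simp only [e3] at hcs
    set p := ∑ S ∈ J.powerset, b S ^ 2
    set q := ∑ S ∈ J.powerset, b (insert j S) ^ 2
    have hp0 : 0 ≤ p := Finset.sum_nonneg fun _ _ => sq_nonneg _
    have hq0 : 0 ≤ q := Finset.sum_nonneg fun _ _ => sq_nonneg _
    have hq4 : 0 ≤ hcExp n (fun x => Q x ^ 4) := hcE_nonneg fun x => by positivity
    have hpq : hcExp n (fun x => P x ^ 2 * Q x ^ 2) ≤ p * q := by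
      refine le_of_abs_le (abs_le_of_sq_le_sq ?_ (by positivity))
      calc _ ≤ _ := hcs
        _ ≤ p ^ 2 * q ^ 2 := mul_le_mul hp hq hq4 (by positivity)
        _ = _ := by ring
    have hp' : hcExp n (fun x => P x ^ 4) ≤ p ^ 2 := hp
    have hq' : hcExp n (fun x => Q x ^ 4) ≤ q ^ 2 := hq
    nlinarith [sq_nonneg q]
lemma hyper_infl {n : ℕ} (f : (Fin n → Bool) → Bool) (i : Fin n) :
    ∑ T : Finset (Fin n), (1 / 3 : ℝ) ^ T.card * fcoef n (derivOn (toReal f) i) T ^ 2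
      ≤ influence n f i * Real.sqrt (influence n f i) := by
  set g := derivOn (toReal f) i with hg
  set P := influence n f i with hP
  set Q := ∑ T : Finset (Fin n), (1 / 3 : ℝ) ^ T.card * fcoef n g T ^ 2 with hQ
  have hP0 : 0 ≤ P := by
    rw [hP, infl_eq]; exact hcE_nonneg fun x => sq_nonneg _
  have hQ0 : 0 ≤ Q := Finset.sum_nonneg fun _ _ => by positivity
  set h := noise (1 / 3) g with hh
  have hin : hcExp n (fun x => g x * h x) = Q := noise_inner (1 / 3) g
  set r : ℝ := Real.sqrt (1 / 3) with hr
  have hr2 : r ^ 2 = 1 / 3 := Real.sq_sqrt (by norm_num)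
  have hhyp := hyper hr2 Finset.univ (fun S => r ^ S.card * fcoef n g S)
  have hrr : ∀ k : ℕ, r ^ k * r ^ k = (1 / 3 : ℝ) ^ k := fun k => by
    rw [← mul_pow, ← pow_two, hr2]
  have h4 : hcExp n (fun x => h x ^ 4) ≤ Q ^ 2 := by
    convert hhyp using 1
    · congr 1; ext x
      rw [Finset.powerset_univ, hh, noise]
      congr 1
      refine Finset.sum_congr rfl fun S _ => ?_
      rw [← hrr]; ring
    · rw [Finset.powerset_univ, hQ]
      congr 1
      refine Finset.sum_congr rfl fun S _ => ?_
      rw [← hrr]; ring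
  have hg4 : ∀ x, (g x ^ 2) ^ 2 = g x ^ 2 := fun x => by
    rw [hg, deriv_sq]; split_ifs <;> norm_num
  have hPg : hcExp n (fun x => g x ^ 2) = P := (infl_eq f i).symm
  -- first C-S
  have c1 := hcE_cs g (fun x => g x * h x)
  have c2 := hcE_cs (fun x => g x ^ 2) (fun x => h x ^ 2)
  have e1 : ∀ x, g x * (g x * h x) = g x ^ 2 * h x := fun x => by ring
  have hgg : ∀ x, g x * (g x * (g x * h x)) = g x * h x := fun x => by
    have : g x = 0 ∨ g x ^ 2 = 1 := by
      have := hg4 x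
      by_cases h0 : g x = 0
      · exact Or.inl h0
      · right
        have : g x ^ 2 * (g x ^ 2 - 1) = 0 := by linarith
        rcases mul_eq_zero.1 this with h | h
        · exact absurd (pow_eq_zero_iff (two_ne_zero) |>.1 h) h0
        · linarith
    rcases this with h | h'
    · simp [h]
    · linear_combination (g x * h x) * h'
  have c3 := hcE_cs g (fun x => g x * (g x * h x))
  simp only [hgg, hin, hPg] at c3
  have e2 : ∀ x, (g x * (g x * h x)) ^ 2 = g x ^ 2 * h x ^ 2 := fun x => by
    have := hg4 x
    linear_combination (h x ^ 2) * this
  simp only [e2] at c3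
  have e3 : ∀ x, (h x ^ 2) ^ 2 = h x ^ 4 := fun x => by ring
  simp only [hg4, hPg, e3] at c2
  have hR : hcExp n (fun x => g x ^ 2 * h x ^ 2) ≤ Real.sqrt P * Q := by
    refine le_of_abs_le (abs_le_of_sq_le_sq ?_ (by positivity))
    rw [mul_pow, Real.sq_sqrt hP0]
    exact c2.trans (by gcongr)
  have c4 : Q ^ 2 ≤ P * (Real.sqrt P * Q) := c3.trans (by gcongr)
  rcases hQ0.eq_or_lt with h0 | h0
  · rw [← h0]; positivity
  · have : Q * Q ≤ (P * Real.sqrt P) * Q := by nlinarith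
    exact le_of_mul_le_mul_right this h0

lemma var_eq {n : ℕ} (f : (Fin n → Bool) → Bool) :
    hcVar n f = ∑ S : Finset (Fin n), if S = ∅ then 0 else fcoef n (toReal f) S ^ 2 := by
  have h := parseval (toReal f)
  have e : ∀ x, toReal f x ^ 2 = toReal f x := fun x => by
    unfold toReal; split_ifs <;> norm_num
  simp only [e] at h
  have e0 : fcoef n (toReal f) ∅ = hcExp n (toReal f) := by
    unfold fcoef; simp [chi_empty]
  unfold hcVar
  rw [← Finset.add_sum_erase _ _ (Finset.mem_univ ∅)]  at h
  rw [← Finset.add_sum_erase _ _ (Finset.mem_univ ∅)]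
  rw [e0] at h
  simp only [if_true]
  have : ∑ S ∈ Finset.univ.erase (∅ : Finset (Fin n)), (if S = ∅ then 0 else fcoef n (toReal f) S ^ 2)
      = ∑ S ∈ Finset.univ.erase (∅ : Finset (Fin n)), fcoef n (toReal f) S ^ 2 :=
    Finset.sum_congr rfl fun S hS => by rw [if_neg (Finset.ne_of_mem_erase hS)]
  rw [this]
  linarith

lemma var_nonneg {n : ℕ} (f : (Fin n → Bool) → Bool) : 0 ≤ hcVar n f := by
  rw [var_eq]
  exact Finset.sum_nonneg fun S _ => by split_ifs <;> positivity

lemma var_le_one {n : ℕ} (f : (Fin n → Bool) → Bool) : hcVar n f ≤ 1 := by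
  unfold hcVar
  nlinarith [sq_nonneg (hcExp n (toReal f) - 1 / 2)]

/-- `(1-1/d)^d ≤ 1/2`. -/
lemma pow_half {d k : ℕ} (hd : 1 ≤ d) (hk : d ≤ k) : (1 - 1 / (d : ℝ)) ^ k ≤ 1 / 2 := by
  have hd' : (1:ℝ) ≤ d := by exact_mod_cast hd
  have h0 : 0 ≤ 1 - 1 / (d : ℝ) := by
    rw [sub_nonneg, div_le_one (by linarith)]; exact hd'
  have h1 : 1 - 1 / (d : ℝ) ≤ 1 := by
    have : 0 ≤ 1 / (d : ℝ) := by positivity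
    linarith
  refine (pow_le_pow_of_le_one h0 h1 hk).trans ?_
  have h2 : 1 - 1 / (d : ℝ) ≤ Real.exp (-(1 / d)) := by
    have := Real.add_one_le_exp (-(1 / (d : ℝ)))
    linarith
  calc (1 - 1 / (d : ℝ)) ^ d ≤ Real.exp (-(1 / d)) ^ d := by gcongr
    _ = Real.exp (-1) := by
      rw [← Real.exp_nat_mul]; congr 1; field_simp
    _ ≤ 1 / 2 := by
      rw [Real.exp_neg, one_div]
      gcongr
      have := Real.add_one_le_exp (1:ℝ)
      linarith

lemma main_ineq {n : ℕ} (f : (Fin n → Bool) → Bool) (d : ℕ) (hd : 1 ≤ d) :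
    hcVar n f ≤ 2 * (hcExp n (fun x => Real.sqrt (sens f x)) * Real.sqrt (1 / d)) +
      (if d = 1 then 0 else
        3 ^ (d - 1) * (∑ i, influence n f i * Real.sqrt (influence n f i))) := by
  have hd' : (1:ℝ) ≤ d := by exact_mod_cast hd
  have h0 : 0 ≤ 1 - 1 / (d : ℝ) := by
    rw [sub_nonneg, div_le_one (by linarith)]; exact hd'
  have h1 : 1 - 1 / (d : ℝ) ≤ 1 := by
    have : 0 ≤ 1 / (d : ℝ) := by positivity
    linarith
  have hs := stab_bound h0 h1 f
  rw [sub_sub_cancel] at hs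
  have hlow : ∑ S : Finset (Fin n), (S.card : ℝ) * (1 / 3) ^ (S.card - 1) * fcoef n (toReal f) S ^ 2
      ≤ ∑ i, influence n f i * Real.sqrt (influence n f i) := by
    have a := deriv_weight (toReal f) (1 / 3)
    have b := Finset.sum_le_sum fun i (_ : i ∈ (Finset.univ : Finset (Fin n))) => hyper_infl f i
    rw [a] at b
    have : 0 ≤ ∑ S : Finset (Fin n), (S.card : ℝ) * (1 / 3) ^ (S.card - 1) * fcoef n (toReal f) S ^ 2 :=
      Finset.sum_nonneg fun S _ => by positivity
    linarith
  rw [var_eq]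
  have main : ∑ S : Finset (Fin n), (if S = ∅ then 0 else fcoef n (toReal f) S ^ 2) ≤
     2 * ∑ S : Finset (Fin n), (1 - (1 - 1 / (d:ℝ)) ^ S.card) * fcoef n (toReal f) S ^ 2 +
     (if d = 1 then 0 else 3 ^ (d - 1) * ∑ S : Finset (Fin n),
      (S.card : ℝ) * (1 / 3) ^ (S.card - 1) * fcoef n (toReal f) S ^ 2) := by
    have e : (if d = 1 then 0 else 3 ^ (d - 1) * ∑ S : Finset (Fin n),
      (S.card : ℝ) * (1 / 3) ^ (S.card - 1) * fcoef n (toReal f) S ^ 2) =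
      ∑ S : Finset (Fin n), if d = 1 then 0 else 3 ^ (d - 1) *
        ((S.card : ℝ) * (1 / 3) ^ (S.card - 1) * fcoef n (toReal f) S ^ 2) := by
      split_ifs
      · simp
      · rw [Finset.mul_sum]
    rw [e, Finset.mul_sum, ← Finset.sum_add_distrib]
    refine Finset.sum_le_sum fun S _ => ?_
    have ha : 0 ≤ fcoef n (toReal f) S ^ 2 := sq_nonneg _
    have hp1 : (1 - 1 / (d:ℝ)) ^ S.card ≤ 1 := pow_le_one₀ h0 h1
    have hx : 0 ≤ (1 - (1 - 1 / (d:ℝ)) ^ S.card) * fcoef n (toReal f) S ^ 2 :=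
      mul_nonneg (by linarith) ha
    have hy : 0 ≤ (if d = 1 then 0 else 3 ^ (d - 1) *
        ((S.card : ℝ) * (1 / 3) ^ (S.card - 1) * fcoef n (toReal f) S ^ 2)) := by
      split_ifs
      · exact le_rfl
      · exact mul_nonneg (pow_nonneg (by norm_num) _) (mul_nonneg (mul_nonneg (Nat.cast_nonneg _)
          (pow_nonneg (by norm_num) _)) ha)
    by_cases hS : S = ∅
    · rw [if_pos hS]; linarith
    · rw [if_neg hS]
      have hc : 1 ≤ S.card := Finset.card_pos.2 (Finset.nonempty_iff_ne_empty.2 hS)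
      by_cases hk : d ≤ S.card
      · have := pow_half hd hk
        nlinarith
      · have hd1 : d ≠ 1 := by omega
        rw [if_neg hd1]
        have hc' : (1:ℝ) ≤ S.card := by exact_mod_cast hc
        have : (1:ℝ) ≤ 3 ^ (d - 1) * ((S.card : ℝ) * (1 / 3) ^ (S.card - 1)) := by
          have t : (1:ℝ) ≤ 3 ^ (d - 1) * (1 / 3) ^ (S.card - 1) := by
            rw [one_div, inv_pow, ← div_eq_mul_inv, le_div_iff₀ (by positivity), one_mul]
            exact pow_le_pow_right₀ (by norm_num) (by omega)
          nlinarith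
        nlinarith
  refine main.trans ?_
  gcongr
  split_ifs
  · exact le_rfl
  · gcongr

lemma eg_bound (K : ℝ) (hK : 0 < K) : ∃ c : ℝ, 0 < c ∧ ∀ n : ℕ, 2 ≤ n →
    ∀ f : (Fin n → Bool) → Bool,
      (∀ i : Fin n, influence n f i ≤ K * hcVar n f * Real.log n / n) →
      c * hcVar n f * Real.sqrt (Real.log n) ≤ hcExp n (fun x => Real.sqrt (sens f x)) := by
  have hev : ∀ᶠ n : ℕ in Filter.atTop, 16 * K ^ 6 * Real.log n ^ 6 ≤ n := by
    have h := (Real.isLittleO_pow_log_id_atTop (n := 6)).bound (show (0:ℝ) < 1 / (16 * K ^ 6) by positivity)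
    have h2 := tendsto_natCast_atTop_atTop (R := ℝ) |>.eventually h
    filter_upwards [h2] with n hn
    simp only [id, Real.norm_eq_abs] at hn
    have a := le_abs_self (Real.log n ^ 6)
    rw [abs_of_nonneg (Nat.cast_nonneg n : (0:ℝ) ≤ n)] at hn
    have := a.trans hn
    rw [one_div, inv_mul_eq_div, le_div_iff₀ (by positivity)] at this
    linarith
  obtain ⟨n0, hn0⟩ := Filter.eventually_atTop.1 hev
  set L0 := Real.sqrt (Real.log (n0 + 2)) with hL0
  have hL0p : 0 < L0 := Real.sqrt_pos.2 (Real.log_pos (by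
    have : (0:ℝ) ≤ n0 := Nat.cast_nonneg _
    linarith))
  refine ⟨min (1 / (2 * L0)) (1 / (4 * Real.sqrt 8)), by positivity, ?_⟩
  intro n hn f hI
  set A := hcExp n (fun x => Real.sqrt (sens f x)) with hA
  set V := hcVar n f with hV
  set L := Real.log n with hL
  have hn' : (2:ℝ) ≤ n := by exact_mod_cast hn
  have hV0 : 0 ≤ V := var_nonneg f
  have hV1 : V ≤ 1 := var_le_one f
  have hLp : 0 < L := Real.log_pos (by linarith)
  by_cases hnn : n0 ≤ n
  · -- large n
    have hbig := hn0 n hnn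
    have hI0 : ∀ i, 0 ≤ influence n f i := fun i => by
      rw [infl_eq]; exact hcE_nonneg fun x => sq_nonneg _
    set d := ⌈L / 8⌉₊ with hd
    have hd1 : 1 ≤ d := Nat.one_le_iff_ne_zero.2 (by
      rw [hd]; exact (Nat.ceil_pos.2 (by positivity)).ne')
    have hdl : L / 8 ≤ d := Nat.le_ceil _
    have hdu : ((d - 1 : ℕ) : ℝ) ≤ L / 8 := by
      have := Nat.ceil_lt_add_one (show 0 ≤ L / 8 by positivity)
      rw [Nat.cast_sub hd1]; push_cast; linarith
    have hm := main_ineq f d hd1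
    rw [← hA, ← hV] at hm
    have hsum : ∑ i, influence n f i * Real.sqrt (influence n f i) ≤
        V * (K * L * Real.sqrt (K * L / n)) := by
      have : ∀ i ∈ (Finset.univ : Finset (Fin n)), influence n f i * Real.sqrt (influence n f i) ≤
          K * V * L / n * Real.sqrt (K * L / n) := by
        intro i _
        refine mul_le_mul (hI i) (Real.sqrt_le_sqrt ((hI i).trans ?_)) (Real.sqrt_nonneg _)
          (by positivity)
        gcongr
        exact mul_le_of_le_one_right hK.le hV1
      refine (Finset.sum_le_sum this).trans (le_of_eq ?_)
      simp
      field_simp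
    have h3 : (3:ℝ) ^ (d - 1) ≤ Real.exp (L / 4) := by
      have : (3:ℝ) ≤ Real.exp 2 := by
        have := Real.add_one_le_exp (2:ℝ); linarith
      calc (3:ℝ) ^ (d - 1) ≤ Real.exp 2 ^ (d - 1) := by gcongr
        _ = Real.exp ((d - 1 : ℕ) * 2) := by rw [← Real.exp_nat_mul]
        _ ≤ _ := by apply Real.exp_le_exp.2; linarith
    have hX : 3 ^ (d - 1) * (K * L * Real.sqrt (K * L / n)) ≤ 1 / 2 := by
      have hnpos : (0:ℝ) < n := by linarith
      have a1 : 3 ^ (d - 1) * (K * L * Real.sqrt (K * L / n)) ≤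
          Real.exp (L / 4) * (K * L * Real.sqrt (K * L / n)) := by gcongr
      refine a1.trans ?_
      refine le_of_pow_le_pow_left₀ (n := 4) (by norm_num) (by norm_num) ?_
      have b1 : Real.exp (L / 4) ^ 4 = n := by
        rw [← Real.exp_nat_mul]
        rw [show ((4:ℕ):ℝ) * (L / 4) = L by push_cast; ring, hL, Real.exp_log hnpos]
      have b2 : Real.sqrt (K * L / n) ^ 4 = (K * L / n) ^ 2 := by
        rw [show 4 = 2 * 2 from rfl, pow_mul, Real.sq_sqrt (by positivity)]
      rw [mul_pow, mul_pow, b1, b2]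
      have b3 : (n:ℝ) * ((K * L) ^ 4 * (K * L / n) ^ 2) = K ^ 6 * L ^ 6 / n := by
        field_simp
      rw [b3, div_le_iff₀ hnpos]
      linarith
    have hlow : (if d = 1 then 0 else
        3 ^ (d - 1) * (∑ i, influence n f i * Real.sqrt (influence n f i))) ≤ V / 2 := by
      split_ifs
      · positivity
      · calc _ ≤ 3 ^ (d - 1) * (V * (K * L * Real.sqrt (K * L / n))) := by gcongr
          _ = V * (3 ^ (d - 1) * (K * L * Real.sqrt (K * L / n))) := by ring
          _ ≤ V * (1 / 2) := by gcongr
          _ = V / 2 := by ring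
    have hdp : 0 < Real.sqrt d := Real.sqrt_pos.2 (by positivity)
    have h5 : V * Real.sqrt d ≤ 4 * A := by
      rw [Real.sqrt_div zero_le_one, Real.sqrt_one] at hm
      have : V ≤ 4 * A / Real.sqrt d := by
        have e : 4 * A / Real.sqrt d = 2 * (2 * (A * (1 / Real.sqrt d))) := by ring
        rw [e]; linarith
      rwa [le_div_iff₀ hdp] at this
    calc min (1 / (2 * L0)) (1 / (4 * Real.sqrt 8)) * V * Real.sqrt L
        ≤ 1 / (4 * Real.sqrt 8) * V * Real.sqrt L := by
          gcongr; exact min_le_right _ _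
      _ = V * Real.sqrt (L / 8) / 4 := by
          rw [Real.sqrt_div hLp.le]; field_simp
      _ ≤ V * Real.sqrt d / 4 := by gcongr
      _ ≤ A := by linarith
  · have hm := main_ineq f 1 le_rfl
    rw [← hA, ← hV] at hm
    simp at hm
    have hLL : Real.sqrt L ≤ L0 := by
      apply Real.sqrt_le_sqrt
      apply Real.log_le_log (by linarith)
      have : (n:ℝ) ≤ n0 := by exact_mod_cast (not_le.1 hnn).le
      linarith
    calc min (1 / (2 * L0)) (1 / (4 * Real.sqrt 8)) * V * Real.sqrt L
        ≤ 1 / (2 * L0) * V * L0 := by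
          gcongr; exact min_le_left _ _
      _ = V / 2 := by field_simp
      _ ≤ A := by linarith

theorem kkl_stability (K : ℝ) (hK : 0 < K) :
    ∃ c δ : ℝ, 0 < c ∧ 0 < δ ∧
      ∀ (n : ℕ), 2 ≤ n →
        ∀ f : (Fin n → Bool) → Bool,
          (∀ i : Fin n, influence n f i ≤ K * hcVar n f * Real.log n / n) →
          hcExp n (fun x =>
              if Real.sqrt (sens f x) ≥ c * hcVar n f * Real.sqrt (Real.log n)
              then 1 else 0) ≥ δ * hcVar n f := by
  obtain ⟨c0, hc0, H⟩ := eg_bound K hK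
  refine ⟨c0 / 2, c0 ^ 2 / (4 * K), by positivity, by positivity, ?_⟩
  intro n hn f hI
  have hA := H n hn f hI
  have hn' : (2:ℝ) ≤ n := by exact_mod_cast hn
  set V := hcVar n f with hV
  set L := Real.log n with hL
  have hV0 : 0 ≤ V := var_nonneg f
  have hLp : 0 < L := Real.log_pos (by linarith)
  set θ := c0 / 2 * V * Real.sqrt L with hθ
  have hθ0 : 0 ≤ θ := by positivity
  set ind : (Fin n → Bool) → ℝ := fun x => if Real.sqrt (sens f x) ≥ θ then 1 else 0 with hind
  set P := hcExp n ind with hP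
  have hP0 : 0 ≤ P := hcE_nonneg fun x => by simp only [hind]; split_ifs <;> norm_num
  have hs : hcExp n (fun x => (sens f x : ℝ)) ≤ K * V * L := by
    rw [sens_mean]
    refine (Finset.sum_le_sum fun i _ => hI i).trans (le_of_eq ?_)
    simp
    field_simp
  have hsplit : hcExp n (fun x => Real.sqrt (sens f x)) ≤
      θ + hcExp n (fun x => Real.sqrt (sens f x) * ind x) := by
    rw [← hcE_const (n := n) θ, ← hcE_add]
    refine hcE_mono fun x => ?_
    simp only [hind, hcE_const]
    split_ifs with h
    · linarith
    · push Not at h; linarith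
  have hcs := hcE_cs (fun x => Real.sqrt (sens f x)) ind
  have e1 : ∀ x, Real.sqrt (sens f x : ℝ) ^ 2 = sens f x := fun x =>
    Real.sq_sqrt (Nat.cast_nonneg _)
  have e2 : ∀ x, ind x ^ 2 = ind x := fun x => by simp only [hind]; split_ifs <;> norm_num
  simp only [e1, e2] at hcs
  have h1 : θ ≤ hcExp n (fun x => Real.sqrt (sens f x) * ind x) := by
    have : c0 * V * Real.sqrt L = 2 * θ := by rw [hθ]; ring
    linarith
  have h2 : θ ^ 2 ≤ K * V * L * P :=
    (pow_le_pow_left₀ hθ0 h1 2).trans (hcs.trans (by gcongr))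
  have h3 : θ ^ 2 = c0 ^ 2 / 4 * V * (V * L) := by
    rw [hθ, mul_pow, Real.sq_sqrt hLp.le]; ring
  show c0 ^ 2 / (4 * K) * V ≤ P
  rcases hV0.eq_or_lt with h | h
  · rw [← h]; simpa using hP0
  · have h4 : c0 ^ 2 / 4 * V * (V * L) ≤ K * P * (V * L) := by rw [← h3]; linarith
    have h5 := le_of_mul_le_mul_right h4 (by positivity)
    have e : c0 ^ 2 / (4 * K) * V = (c0 ^ 2 / 4 * V) / K := by field_simp
    rw [e, div_le_iff₀ hK]
    linarith

end
end

section
/- For every p with 1 ≤ p ≤ 2, every n ∈ ℕ and every function f : {0,1}^n → {−1,1}, E_x[‖∇f(x)‖_p] ≥ (W_{=1}[f])^{1/p}. -/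
open Finset

noncomputable section

lemma hc_flip_sum {n : ℕ} (g : (Fin n → Bool) → ℝ) (i : Fin n) :
    ∑ x, g (hcFlip x i) = ∑ x, g x := by
  have hinv : Function.Involutive (fun x : Fin n → Bool => hcFlip x i) := by
    intro x
    simp [hcFlip]
  exact Equiv.sum_comp (hinv.toPerm) g

lemma hc_deriv_eq {n : ℕ} (f : (Fin n → Bool) → ℝ) (i : Fin n) (x : Fin n → Bool) :
    derivOn f i x = f x * chi {i} x + f (hcFlip x i) * chi {i} (hcFlip x i) := by
  cases h : x i
  · have h0 : Function.update x i false = x := by rw [← h]; simp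
    simp [derivOn, chi, hcFlip, h, h0]; ring
  · have h0 : Function.update x i true = x := by rw [← h]; simp
    simp [derivOn, chi, hcFlip, h, h0]; ring

lemma hc_deriv_sum {n : ℕ} (f : (Fin n → Bool) → ℝ) (i : Fin n) :
    ∑ x, derivOn f i x = 2 ^ n * (2 * fcoef n f {i}) := by
  simp only [hc_deriv_eq, Finset.sum_add_distrib]
  rw [hc_flip_sum (fun x => f x * chi {i} x) i]
  simp only [fcoef, hcExp]
  field_simp
  ring

lemma hc_fcoef_le {n : ℕ} (f : (Fin n → Bool) → ℝ) (hf : ∀ x, f x = 1 ∨ f x = -1)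
    (i : Fin n) : |fcoef n f {i}| ≤ 1 := by
  simp only [fcoef, hcExp]
  rw [abs_div, abs_of_pos (by positivity : (0:ℝ) < 2 ^ n), div_le_one (by positivity)]
  refine (Finset.abs_sum_le_sum_abs _ _).trans ?_
  have : ∀ x : Fin n → Bool, |f x * chi {i} x| = 1 := by
    intro x
    rcases hf x with h | h <;> cases h' : x i <;> simp [chi, h, h']
  simp [this]

lemma hc_wEq_one (n : ℕ) (f : (Fin n → Bool) → ℝ) :
    wEq n f 1 = ∑ i, (fcoef n f {i}) ^ 2 := by
  unfold wEq
  symm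
  refine Finset.sum_bij (fun i _ => {i}) ?_ ?_ ?_ ?_
  · simp
  · intro a _ b _ h; simpa using h
  · intro S hS
    obtain ⟨a, ha⟩ := Finset.card_eq_one.1 (Finset.mem_filter.1 hS).2
    exact ⟨a, Finset.mem_univ _, ha.symm⟩
  · simp

lemma hc_minkowski {n : ℕ} (p : ℝ) (hp1 : 1 ≤ p) (g : (Fin n → Bool) → Fin n → ℝ) :
    (∑ i, |∑ x, g x i| ^ p) ^ (1 / p) ≤ ∑ x, (∑ i, |g x i| ^ p) ^ (1 / p) := by
  have hp0 : 0 < p := by linarith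
  haveI : Fact (1 ≤ ENNReal.ofReal p) := ⟨by simpa using hp1⟩
  have ht : (ENNReal.ofReal p).toReal = p := ENNReal.toReal_ofReal hp0.le
  have key := norm_sum_le (Finset.univ : Finset (Fin n → Bool))
    (fun x => (WithLp.toLp (ENNReal.ofReal p) (g x) : PiLp (ENNReal.ofReal p) fun _ : Fin n => ℝ))
  simpa [PiLp.norm_eq_sum (p := ENNReal.ofReal p) (by rw [ht]; exact hp0), ht] using key

theorem grad_lp_lower_bound_level_one (p : ℝ) (hp1 : 1 ≤ p) (hp2 : p ≤ 2)
    (n : ℕ) (f : (Fin n → Bool) → ℝ) (hf : ∀ x, f x = 1 ∨ f x = -1) :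
    hcExp n (fun x => gradNormP p f x) ≥ (wEq n f 1) ^ (1 / p) := by
  have hp0 : 0 < p := by linarith
  have key := hc_minkowski p hp1 (fun x i => derivOn f i x)
  simp only [hc_deriv_sum] at key
  unfold hcExp gradNormP
  rw [ge_iff_le, le_div_iff₀ (by positivity)]
  refine le_trans ?_ key
  have hc : (0:ℝ) < 2 ^ n := by positivity
  have h1 : ∀ i, |(2:ℝ) ^ n * (2 * fcoef n f {i})| ^ p
      = ((2:ℝ) ^ n) ^ p * |2 * fcoef n f {i}| ^ p := by
    intro i
    rw [abs_mul, abs_of_pos hc, Real.mul_rpow hc.le (abs_nonneg _)]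
  simp only [h1]
  rw [← Finset.mul_sum, Real.mul_rpow (by positivity)
    (Finset.sum_nonneg fun i _ => Real.rpow_nonneg (abs_nonneg _) _), one_div,
    Real.rpow_rpow_inv hc.le hp0.ne', mul_comm]
  refine mul_le_mul_of_nonneg_left ?_ hc.le
  rw [hc_wEq_one]
  refine Real.rpow_le_rpow (Finset.sum_nonneg fun i _ => sq_nonneg _) ?_ (by positivity)
  refine Finset.sum_le_sum fun i _ => ?_
  have ha := hc_fcoef_le f hf i
  have h2 : |fcoef n f {i}| ^ p ≤ |2 * fcoef n f {i}| ^ p := by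
    refine Real.rpow_le_rpow (abs_nonneg _) ?_ hp0.le
    rw [abs_mul, abs_two]; linarith [abs_nonneg (fcoef n f {i})]
  refine le_trans ?_ h2
  rw [← sq_abs, ← Real.rpow_two]
  rcases (abs_nonneg (fcoef n f {i})).eq_or_lt with h0 | h0
  · rw [← h0, Real.zero_rpow (by norm_num), Real.zero_rpow hp0.ne']
  · exact Real.rpow_le_rpow_of_exponent_ge h0 ha hp2

end
end

section
/- There exists an absolute constant C > 0 such that for every δ ∈ [0, 1/2], every ε ∈ (0, 1], every A > 0, every n ∈ ℕ and every f : {0,1}^n → {0,1} satisfying E_x[s_f(x)^{1/2+δ}] ≤ A, one has Stab_{1−ε}(f) ≥ E[f²] − C·A·ε^{1/2+δ}; equivalently, Pr_{(x,y) (1−ε)-correlated}[f(x) ≠ f(y)] ≤ C·A·ε^{1/2+δ}. -/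
open Finset

noncomputable section

/-- The noise operator `T_ρ`: `y i = x i` with probability `ρ`, and uniform otherwise,
so `y i = x i` with total probability `(1 + ρ)/2`. -/
def noiseOp (n : ℕ) (ρ : ℝ) (g : (Fin n → Bool) → ℝ) (x : Fin n → Bool) : ℝ :=
  ∑ y : Fin n → Bool,
    (∏ i, if y i = x i then (1 + ρ) / 2 else (1 - ρ) / 2) * g y

/-- Noise stability of `f` at correlation `ρ`. -/
def stab (n : ℕ) (ρ : ℝ) (f : (Fin n → Bool) → Bool) : ℝ :=
  hcExp n (fun x => toReal f x * noiseOp n ρ (toReal f) x)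

/-- Probability that `f(x) ≠ f(y)` for a `ρ`-correlated pair `(x, y)`. -/
def corrDisagree (n : ℕ) (ρ : ℝ) (f : (Fin n → Bool) → Bool) : ℝ :=
  hcExp n (fun x => ∑ y : Fin n → Bool,
    (∏ i, if y i = x i then (1 + ρ) / 2 else (1 - ρ) / 2) *
      (if f x = f y then 0 else 1))

/-- one-coordinate noise kernel -/
def wker (ρ : ℝ) (a b : Bool) : ℝ := if b = a then (1 + ρ) / 2 else (1 - ρ) / 2

/-- sign of a bit -/
def sgb (b : Bool) : ℝ := if b then -1 else 1

/-- discrete partial derivative of the multilinear extension -/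
def Hder (n : ℕ) (ρ : ℝ) (F : (Fin n → Bool) → ℝ) (i : Fin n) (x : Fin n → Bool) : ℝ :=
  ∑ y : Fin n → Bool, (∏ j ∈ univ.erase i, wker ρ (x j) (y j)) * (sgb (y i) / 2) * F y

lemma sum_prod_cube (n : ℕ) (h : Fin n → Bool → ℝ) :
    ∑ y : Fin n → Bool, ∏ k, h k (y k) = ∏ k, (h k true + h k false) := by
  have := (Finset.prod_univ_sum (fun _ : Fin n => (univ : Finset Bool)) h).symm
  rw [Fintype.piFinset_univ] at this
  rw [this]
  simp

lemma wker_sum (ρ : ℝ) (a : Bool) : wker ρ a true + wker ρ a false = 1 := by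
  cases a <;> simp [wker] <;> ring

lemma wker_comm (ρ : ℝ) (a b : Bool) : wker ρ a b = wker ρ b a := by
  simp [wker, eq_comm]

lemma wker_pos {ρ : ℝ} (h0 : 0 ≤ ρ) (h1 : ρ < 1) (a b : Bool) : 0 < wker ρ a b := by
  unfold wker; split_ifs <;> linarith

lemma W_sum (n : ℕ) (ρ : ℝ) (x : Fin n → Bool) :
    ∑ y : Fin n → Bool, ∏ i, wker ρ (x i) (y i) = 1 := by
  rw [sum_prod_cube n (fun k b => wker ρ (x k) b)]
  simp [wker_sum]

lemma W_sum' (n : ℕ) (ρ : ℝ) (y : Fin n → Bool) :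
    ∑ x : Fin n → Bool, ∏ i, wker ρ (x i) (y i) = 1 := by
  rw [← W_sum n ρ y]
  refine sum_congr rfl fun x _ => prod_congr rfl fun i _ => wker_comm _ _ _

lemma stab_eq (n : ℕ) (ρ : ℝ) (f : (Fin n → Bool) → Bool) :
    stab n ρ f = (∑ x : Fin n → Bool, ∑ y : Fin n → Bool,
      (∏ i, wker ρ (x i) (y i)) * (toReal f x * toReal f y)) / 2 ^ n := by
  unfold stab hcExp noiseOp
  congr 1
  refine sum_congr rfl fun x _ => ?_
  beta_reduce
  rw [mul_sum]
  refine sum_congr rfl fun y _ => ?_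
  simp only [wker]; ring

lemma toReal_sq {n : ℕ} (f : (Fin n → Bool) → Bool) (x) : toReal f x ^ 2 = toReal f x := by
  unfold toReal; split_ifs <;> norm_num

lemma corr_eq (n : ℕ) (ρ : ℝ) (f : (Fin n → Bool) → Bool) :
    corrDisagree n ρ f = 2 * (hcExp n (fun x => toReal f x ^ 2) - stab n ρ f) := by
  rw [stab_eq]
  unfold corrDisagree hcExp
  rw [← sub_div, ← mul_div_assoc]
  congr 1
  have h1 : ∀ x y : Fin n → Bool, (if f x = f y then (0:ℝ) else 1)
      = toReal f x + toReal f y - 2 * (toReal f x * toReal f y) := by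
    intro x y; unfold toReal
    cases f x <;> cases f y <;> norm_num
  have h2 : ∑ x : Fin n → Bool, ∑ y : Fin n → Bool,
      (∏ i, wker ρ (x i) (y i)) * toReal f x = ∑ x, toReal f x := by
    refine sum_congr rfl fun x _ => ?_
    rw [← sum_mul, W_sum, one_mul]
  have h3 : ∑ x : Fin n → Bool, ∑ y : Fin n → Bool,
      (∏ i, wker ρ (x i) (y i)) * toReal f y = ∑ x, toReal f x := by
    rw [sum_comm]
    refine sum_congr rfl fun x _ => ?_
    rw [← sum_mul, W_sum', one_mul]
  simp only [toReal_sq]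
  calc _ = ∑ x : Fin n → Bool, ∑ y : Fin n → Bool,
      ((∏ i, wker ρ (x i) (y i)) * toReal f x + (∏ i, wker ρ (x i) (y i)) * toReal f y
        - 2 * ((∏ i, wker ρ (x i) (y i)) * (toReal f x * toReal f y))) := by
        refine sum_congr rfl fun x _ => sum_congr rfl fun y _ => ?_
        rw [h1]; simp only [wker]; ring
    _ = _ := by
        simp only [sum_sub_distrib, sum_add_distrib, ← mul_sum]
        rw [h2, h3]; ring

lemma stab_one (n : ℕ) (f : (Fin n → Bool) → Bool) :
    stab n 1 f = hcExp n (fun x => toReal f x ^ 2) := by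
  rw [stab_eq]; unfold hcExp
  congr 1
  refine sum_congr rfl fun x _ => ?_
  rw [Finset.sum_eq_single x]
  · simp [wker, sq]
  · intro y _ hy
    obtain ⟨i, hi⟩ := Function.ne_iff.mp hy
    rw [Finset.prod_eq_zero (Finset.mem_univ i), zero_mul]
    simp [wker, hi]
  · simp

lemma wker_deriv (ρ : ℝ) (a b : Bool) :
    HasDerivAt (fun r => wker r a b) (sgb a * sgb b / 2) ρ := by
  have h1 : HasDerivAt (fun r : ℝ => (1 + r) / 2) (1 / 2) ρ :=
    ((hasDerivAt_id ρ).const_add 1).div_const 2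
  have h2 : HasDerivAt (fun r : ℝ => (1 - r) / 2) (-1 / 2) ρ :=
    ((hasDerivAt_id ρ).const_sub 1).div_const 2
  cases a <;> cases b <;> simp [wker, sgb] <;> first | simpa using h1 | simpa using h2

lemma stab_deriv (n : ℕ) (ρ : ℝ) (f : (Fin n → Bool) → Bool) :
    HasDerivAt (fun r => stab n r f)
      ((∑ x : Fin n → Bool, ∑ i, toReal f x * sgb (x i) * Hder n ρ (toReal f) i x) / 2 ^ n) ρ := by
  simp only [stab_eq]
  refine HasDerivAt.div_const ?_ _
  refine HasDerivAt.fun_sum fun x _ => ?_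
  have : ∑ i, toReal f x * sgb (x i) * Hder n ρ (toReal f) i x
     = ∑ y : Fin n → Bool, (∑ i, (∏ j ∈ univ.erase i, wker ρ (x j) (y j)) •
        (sgb (x i) * sgb (y i) / 2)) * (toReal f x * toReal f y) := by
    simp only [Hder, mul_sum, sum_mul]
    rw [sum_comm]
    refine sum_congr rfl fun y _ => sum_congr rfl fun i _ => ?_
    simp only [smul_eq_mul]; ring
  rw [this]
  refine HasDerivAt.fun_sum fun y _ => ?_
  refine HasDerivAt.mul_const ?_ _
  exact HasDerivAt.fun_finsetProd fun i _ => wker_deriv ρ (x i) (y i)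

lemma hcFlip_invol {n : ℕ} (i : Fin n) : Function.Involutive (fun x : Fin n → Bool => hcFlip x i) := by
  intro x; simp [hcFlip]

lemma Hder_flip (n : ℕ) (ρ : ℝ) (F : (Fin n → Bool) → ℝ) (i : Fin n) (x : Fin n → Bool) :
    Hder n ρ F i (hcFlip x i) = Hder n ρ F i x := by
  unfold Hder
  refine sum_congr rfl fun y _ => ?_
  congr 2
  refine prod_congr rfl fun j hj => ?_
  have : j ≠ i := (Finset.mem_erase.mp hj).1
  simp [hcFlip, this]

lemma sgb_flip {n : ℕ} (x : Fin n → Bool) (i : Fin n) : sgb (hcFlip x i i) = - sgb (x i) := by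
  cases h : x i <;> simp [hcFlip, sgb, h]

/-- signed derivative coefficient -/
def cof {n : ℕ} (f : (Fin n → Bool) → Bool) (x : Fin n → Bool) (i : Fin n) : ℝ :=
  (toReal f x - toReal f (hcFlip x i)) * sgb (x i)

lemma deriv_sym (n : ℕ) (ρ : ℝ) (f : (Fin n → Bool) → Bool) :
    ∑ x : Fin n → Bool, ∑ i, toReal f x * sgb (x i) * Hder n ρ (toReal f) i x
      = ∑ x : Fin n → Bool, (1 / 2) * ∑ i, cof f x i * Hder n ρ (toReal f) i x := by
  have hc : ∑ x : Fin n → Bool, ∑ i, cof f x i * Hder n ρ (toReal f) i x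
      = ∑ i, ∑ x : Fin n → Bool, cof f x i * Hder n ρ (toReal f) i x := sum_comm
  rw [← mul_sum, sum_comm, hc, mul_sum]
  refine sum_congr rfl fun i _ => ?_
  have key : ∑ x : Fin n → Bool, toReal f x * sgb (x i) * Hder n ρ (toReal f) i x
     = ∑ x : Fin n → Bool, toReal f (hcFlip x i) * (- sgb (x i)) * Hder n ρ (toReal f) i x := by
    rw [← Equiv.sum_comp (hcFlip_invol i).toPerm]
    refine sum_congr rfl fun x _ => ?_
    simp only [Function.Involutive.coe_toPerm]
    rw [Hder_flip, sgb_flip]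
  have e : ∑ x : Fin n → Bool, cof f x i * Hder n ρ (toReal f) i x =
     ∑ x : Fin n → Bool, toReal f x * sgb (x i) * Hder n ρ (toReal f) i x +
     ∑ x : Fin n → Bool, toReal f (hcFlip x i) * (- sgb (x i)) * Hder n ρ (toReal f) i x := by
    rw [← sum_add_distrib]
    refine sum_congr rfl fun x _ => ?_
    unfold cof; ring
  rw [e, ← key]; ring

lemma sgb_sq (b : Bool) : sgb b ^ 2 = 1 := by cases b <;> simp [sgb]

lemma cof_sq {n : ℕ} (f : (Fin n → Bool) → Bool) (x : Fin n → Bool) (i : Fin n) :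
    cof f x i ^ 2 = if f (hcFlip x i) ≠ f x then 1 else 0 := by
  unfold cof
  rw [mul_pow, sgb_sq]
  unfold toReal
  cases f x <;> cases f (hcFlip x i) <;> norm_num

lemma cof_abs {n : ℕ} (f : (Fin n → Bool) → Bool) (x : Fin n → Bool) (i : Fin n) :
    |cof f x i| = if f (hcFlip x i) ≠ f x then 1 else 0 := by
  have h := cof_sq f x i
  rw [← sq_abs] at h
  split_ifs at h ⊢
  · exact (pow_eq_one_iff_of_nonneg (abs_nonneg _) two_ne_zero).mp h
  · exact pow_eq_zero_iff two_ne_zero |>.mp h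

lemma cof_sq_sum {n : ℕ} (f : (Fin n → Bool) → Bool) (x : Fin n → Bool) :
    ∑ i, cof f x i ^ 2 = sens f x := by
  simp only [cof_sq, sens, Finset.sum_boole]

lemma cof_abs_sum {n : ℕ} (f : (Fin n → Bool) → Bool) (x : Fin n → Bool) :
    ∑ i, |cof f x i| = sens f x := by
  simp only [cof_abs, sens, Finset.sum_boole]

lemma toReal_abs {n : ℕ} (f : (Fin n → Bool) → Bool) (x) : |toReal f x| ≤ 1 := by
  unfold toReal; split_ifs <;> norm_num

lemma Hder_le_one (n : ℕ) {ρ : ℝ} (h0 : 0 ≤ ρ) (h1 : ρ < 1) (f : (Fin n → Bool) → Bool)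
    (i : Fin n) (x : Fin n → Bool) : |Hder n ρ (toReal f) i x| ≤ 1 := by
  have e : ∑ y : Fin n → Bool, (∏ j ∈ univ.erase i, wker ρ (x j) (y j)) * (1 / 2) = 1 := by
    have h := sum_prod_cube n (fun k b => if k = i then (1:ℝ) / 2 else wker ρ (x k) b)
    have hr : ∏ k, ((if k = i then (1:ℝ) / 2 else wker ρ (x k) true) +
        (if k = i then (1:ℝ) / 2 else wker ρ (x k) false)) = 1 := by
      refine prod_eq_one fun k _ => ?_
      split_ifs
      · norm_num
      · exact wker_sum _ _
    rw [hr] at h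
    refine Eq.trans ?_ h
    refine sum_congr rfl fun y _ => ?_
    rw [← Finset.prod_erase_mul univ _ (mem_univ i)]
    congr 1
    · refine prod_congr rfl fun j hj => ?_
      rw [if_neg (Finset.mem_erase.mp hj).1]
    · simp
  rw [← e]
  unfold Hder
  refine (abs_sum_le_sum_abs _ _).trans (sum_le_sum fun y _ => ?_)
  have hp : 0 ≤ ∏ j ∈ univ.erase i, wker ρ (x j) (y j) :=
    prod_nonneg fun j _ => (wker_pos h0 h1 _ _).le
  have hs : |sgb (y i) / 2| = 1 / 2 := by
    cases y i <;> norm_num [sgb, abs_of_pos, abs_of_neg]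
  rw [abs_mul, abs_mul, abs_of_nonneg hp, hs]
  exact mul_le_of_le_one_right (by positivity) (toReal_abs f y)

/-- score function -/
def phi {n : ℕ} (ρ : ℝ) (x : Fin n → Bool) (i : Fin n) (b : Bool) : ℝ :=
  sgb b / (2 * wker ρ (x i) b)

lemma Hder_phi (n : ℕ) {ρ : ℝ} (h0 : 0 ≤ ρ) (h1 : ρ < 1) (F : (Fin n → Bool) → ℝ)
    (i : Fin n) (x : Fin n → Bool) :
    Hder n ρ F i x = ∑ y : Fin n → Bool, (∏ j, wker ρ (x j) (y j)) * (phi ρ x i (y i) * F y) := by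
  unfold Hder
  refine sum_congr rfl fun y _ => ?_
  rw [← Finset.prod_erase_mul univ _ (mem_univ i)]
  have := (wker_pos h0 h1 (x i) (y i)).ne'
  unfold phi
  field_simp

lemma phi_mean {n : ℕ} {ρ : ℝ} (h0 : 0 ≤ ρ) (h1 : ρ < 1) (x : Fin n → Bool) (i : Fin n) :
    wker ρ (x i) true * phi ρ x i true + wker ρ (x i) false * phi ρ x i false = 0 := by
  have a := (wker_pos h0 h1 (x i) true).ne'
  have b := (wker_pos h0 h1 (x i) false).ne'
  unfold phi; field_simp; simp [sgb]

lemma phi_var {n : ℕ} {ρ : ℝ} (h0 : 0 ≤ ρ) (h1 : ρ < 1) (x : Fin n → Bool) (i : Fin n) :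
    wker ρ (x i) true * phi ρ x i true ^ 2 + wker ρ (x i) false * phi ρ x i false ^ 2
      = 1 / (1 - ρ ^ 2) := by
  have a : 1 + ρ ≠ 0 := by linarith
  have b : 1 - ρ ≠ 0 := by linarith
  have c : 1 - ρ ^ 2 ≠ 0 := by
    have : 1 - ρ ^ 2 = (1 + ρ) * (1 - ρ) := by ring
    rw [this]; exact mul_ne_zero a b
  cases h : x i <;> simp [phi, wker, sgb, h] <;> field_simp <;> ring

lemma phi_orth {n : ℕ} {ρ : ℝ} (h0 : 0 ≤ ρ) (h1 : ρ < 1) (x : Fin n → Bool) (i j : Fin n) :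
    ∑ y : Fin n → Bool, (∏ k, wker ρ (x k) (y k)) * (phi ρ x i (y i) * phi ρ x j (y j))
      = if i = j then 1 / (1 - ρ ^ 2) else 0 := by
  have h := sum_prod_cube n (fun k b => wker ρ (x k) b * ((if k = i then phi ρ x k b else 1) *
    (if k = j then phi ρ x k b else 1)))
  have hl : ∀ y : Fin n → Bool, ∏ k, (wker ρ (x k) (y k) * ((if k = i then phi ρ x k (y k) else 1) *
    (if k = j then phi ρ x k (y k) else 1))) =
      (∏ k, wker ρ (x k) (y k)) * (phi ρ x i (y i) * phi ρ x j (y j)) := by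
    intro y
    rw [prod_mul_distrib, prod_mul_distrib, Finset.prod_ite_eq' univ i (fun k => phi ρ x k (y k)),
      Finset.prod_ite_eq' univ j (fun k => phi ρ x k (y k))]
    simp
  simp only [hl] at h
  rw [h]
  split_ifs with hij
  · subst hij
    rw [Finset.prod_eq_single i]
    · rw [← phi_var h0 h1 x i]; simp only [if_true]; ring
    · intro k _ hk; simp [hk, wker_sum]
    · simp
  · refine prod_eq_zero (mem_univ i) ?_
    simp [hij, phi_mean h0 h1 x i]

lemma cs_bound (n : ℕ) {ρ : ℝ} (h0 : 0 ≤ ρ) (h1 : ρ < 1) (f : (Fin n → Bool) → Bool)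
    (x : Fin n → Bool) :
    (∑ i, cof f x i * Hder n ρ (toReal f) i x) ^ 2 ≤ sens f x / (1 - ρ ^ 2) := by
  set W : (Fin n → Bool) → ℝ := fun y => ∏ j, wker ρ (x j) (y j) with hW
  have hWp : ∀ y, 0 ≤ W y := fun y => prod_nonneg fun j _ => (wker_pos h0 h1 _ _).le
  set G : (Fin n → Bool) → ℝ := fun y => ∑ i, cof f x i * phi ρ x i (y i) with hG
  have e1 : ∑ i, cof f x i * Hder n ρ (toReal f) i x = ∑ y, (W y * G y * toReal f y) := by
    simp only [Hder_phi n h0 h1, mul_sum, hG, sum_mul]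
    rw [sum_comm]
    refine sum_congr rfl fun y _ => sum_congr rfl fun i _ => ?_
    simp only [hW]; ring
  have e2 : ∑ y, W y * G y ^ 2 = sens f x / (1 - ρ ^ 2) := by
    have : ∀ y, W y * G y ^ 2 = ∑ i, ∑ j, cof f x i * cof f x j *
        (W y * (phi ρ x i (y i) * phi ρ x j (y j))) := by
      intro y
      rw [sq, hG, sum_mul_sum, mul_sum]
      refine sum_congr rfl fun i _ => ?_
      rw [mul_sum]
      refine sum_congr rfl fun j _ => ?_
      ring
    simp only [this]
    rw [sum_comm]
    rw [← cof_sq_sum, sum_div]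
    refine sum_congr rfl fun i _ => ?_
    rw [sum_comm]
    simp only [← mul_sum, hW, phi_orth h0 h1]
    simp; ring
  rw [e1, ← e2]
  have cs := Finset.sum_sq_le_sum_mul_sum_of_sq_le_mul (univ : Finset (Fin n → Bool))
    (r := fun y => W y * G y * toReal f y) (f := W) (g := fun y => W y * G y ^ 2)
    (fun y _ => hWp y) (fun y _ => mul_nonneg (hWp y) (sq_nonneg _)) ?_
  · rw [W_sum, one_mul] at cs
    exact cs
  · intro y _
    have : toReal f y ^ 2 ≤ 1 := (sq_le_one_iff_abs_le_one _).mpr (toReal_abs f y)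
    calc (W y * G y * toReal f y) ^ 2 = (W y * G y) ^ 2 * toReal f y ^ 2 := by ring
      _ ≤ (W y * G y) ^ 2 * 1 := by gcongr
      _ = _ := by ring

lemma lin_bound (n : ℕ) {ρ : ℝ} (h0 : 0 ≤ ρ) (h1 : ρ < 1) (f : (Fin n → Bool) → Bool)
    (x : Fin n → Bool) :
    |∑ i, cof f x i * Hder n ρ (toReal f) i x| ≤ sens f x := by
  rw [← cof_abs_sum]
  refine (abs_sum_le_sum_abs _ _).trans (sum_le_sum fun i _ => ?_)
  rw [abs_mul]
  exact mul_le_of_le_one_right (abs_nonneg _) (Hder_le_one n h0 h1 f i x)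

lemma interp {X a u p : ℝ} (hX : 0 ≤ X) (ha : 0 ≤ a) (hu : 0 < u) (hp : 1 / 2 ≤ p) (hp1 : p ≤ 1)
    (h1 : X ≤ a) (h2 : X ^ 2 ≤ a / u) : X ≤ a ^ p * u ^ (p - 1) := by
  rw [Real.rpow_sub_one hu.ne', ← mul_div_assoc, ← Real.mul_rpow ha hu.le, le_div_iff₀ hu]
  have k1 : X * u ≤ a * u := by gcongr
  have k2 : (X * u) ^ 2 ≤ a * u := by
    rw [le_div_iff₀ hu] at h2
    nlinarith
  rcases le_total (a * u) 1 with h | h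
  · rcases (mul_nonneg ha hu.le).eq_or_lt with h' | h'
    · rw [← h'] at k1 ⊢
      exact k1.trans (Real.rpow_nonneg le_rfl _)
    · refine k1.trans ?_
      simpa using Real.rpow_le_rpow_of_exponent_ge h' h hp1
  · refine (Real.le_sqrt_of_sq_le k2).trans ?_
    rw [Real.sqrt_eq_rpow]
    exact Real.rpow_le_rpow_of_exponent_le h hp

lemma deriv_bound (n : ℕ) {ρ p A : ℝ} (h0 : 0 ≤ ρ) (h1 : ρ < 1) (hp : 1 / 2 ≤ p) (hp1 : p ≤ 1)
    (f : (Fin n → Bool) → Bool) (hA : hcExp n (fun x => (sens f x : ℝ) ^ p) ≤ A) :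
    (∑ x : Fin n → Bool, ∑ i, toReal f x * sgb (x i) * Hder n ρ (toReal f) i x) / 2 ^ n
      ≤ A / 2 * (1 - ρ) ^ (p - 1) := by
  have hu : 0 < 1 - ρ := by linarith
  have h : ∀ x, ∑ i, cof f x i * Hder n ρ (toReal f) i x ≤
      (sens f x : ℝ) ^ p * (1 - ρ) ^ (p - 1) := by
    intro x
    refine (le_abs_self _).trans (interp (abs_nonneg _) (Nat.cast_nonneg _) hu hp hp1
      (lin_bound n h0 h1 f x) ?_)
    rw [sq_abs]
    refine (cs_bound n h0 h1 f x).trans ?_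
    gcongr
    nlinarith
  rw [deriv_sym]
  calc _ ≤ (∑ x : Fin n → Bool, (1 / 2) * ((sens f x : ℝ) ^ p * (1 - ρ) ^ (p - 1))) / 2 ^ n := by
        gcongr with x _
        exact h x
    _ = hcExp n (fun x => (sens f x : ℝ) ^ p) / 2 * (1 - ρ) ^ (p - 1) := by
        unfold hcExp
        rw [← mul_sum, ← sum_mul]; ring
    _ ≤ _ := by
        have := Real.rpow_nonneg hu.le (p - 1)
        gcongr

lemma main_bound (n : ℕ) {ε p A : ℝ} (h0 : 0 < ε) (h1 : ε ≤ 1) (hp : 1 / 2 ≤ p) (hp1 : p ≤ 1)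
    (f : (Fin n → Bool) → Bool) (hA : hcExp n (fun x => (sens f x : ℝ) ^ p) ≤ A) :
    stab n 1 f ≤ stab n (1 - ε) f + A / (2 * p) * ε ^ p := by
  have hp0 : 0 < p := by linarith
  have hd : ∀ r : ℝ, r < 1 → HasDerivAt (fun r => stab n r f + A / (2 * p) * (1 - r) ^ p)
      ((∑ x : Fin n → Bool, ∑ i, toReal f x * sgb (x i) * Hder n r (toReal f) i x) / 2 ^ n
        + A / (2 * p) * (-1 * p * (1 - r) ^ (p - 1))) r := by
    intro r hr
    refine (stab_deriv n r f).add (HasDerivAt.const_mul _ ?_)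
    exact ((hasDerivAt_id r).const_sub 1).rpow_const (Or.inl (by simp; linarith))
  have anti : AntitoneOn (fun r => stab n r f + A / (2 * p) * (1 - r) ^ p) (Set.Icc (1 - ε) 1) := by
    refine antitoneOn_of_deriv_nonpos (convex_Icc _ _) ?_ ?_ ?_
    · refine Continuous.continuousOn ?_
      refine Continuous.add ?_ (continuous_const.mul ?_)
      · exact continuous_iff_continuousAt.mpr fun r => (stab_deriv n r f).continuousAt
      · exact (continuous_const.sub continuous_id).rpow_const fun _ => Or.inr hp0.le
    · rw [interior_Icc]
      intro r hr
      exact (hd r hr.2).differentiableAt.differentiableWithinAt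
    · rw [interior_Icc]
      intro r hr
      rw [(hd r hr.2).deriv]
      have := deriv_bound n (by linarith [hr.1]) hr.2 hp hp1 f hA
      have e : A / (2 * p) * (-1 * p * (1 - r) ^ (p - 1)) = - (A / 2 * (1 - r) ^ (p - 1)) := by
        field_simp
      rw [e]; linarith
  have := anti (Set.left_mem_Icc.mpr (by linarith)) (Set.right_mem_Icc.mpr (by linarith))
    (by linarith : 1 - ε ≤ 1)
  simpa [Real.zero_rpow hp0.ne'] using this

theorem noise_stability_from_sensitivity_moment :
    ∃ C : ℝ, 0 < C ∧ ∀ (δ : ℝ), 0 ≤ δ → δ ≤ 1 / 2 →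
      ∀ (ε : ℝ), 0 < ε → ε ≤ 1 → ∀ (A : ℝ), 0 < A →
        ∀ (n : ℕ) (f : (Fin n → Bool) → Bool),
          hcExp n (fun x => (sens f x : ℝ) ^ ((1 : ℝ) / 2 + δ)) ≤ A →
          stab n (1 - ε) f ≥ hcExp n (fun x => toReal f x ^ 2) - C * A * ε ^ ((1 : ℝ) / 2 + δ)
          ∧ corrDisagree n (1 - ε) f ≤ C * A * ε ^ ((1 : ℝ) / 2 + δ) := by
  refine ⟨2, by norm_num, ?_⟩
  intro δ hδ hδ' ε hε hε' A hA n f hf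
  have h := main_bound n hε hε' (by linarith) (by linarith) f hf
  rw [stab_one] at h
  have hpos : 0 ≤ ε ^ ((1 : ℝ) / 2 + δ) := Real.rpow_nonneg hε.le _
  have h2 : A / (2 * (1 / 2 + δ)) * ε ^ ((1 : ℝ) / 2 + δ) ≤ A * ε ^ ((1 : ℝ) / 2 + δ) := by
    refine mul_le_mul_of_nonneg_right ?_ hpos
    exact div_le_self hA.le (by linarith)
  have h3 : 0 ≤ A * ε ^ ((1 : ℝ) / 2 + δ) := mul_nonneg hA.le hpos
  refine ⟨by nlinarith, ?_⟩
  rw [corr_eq]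
  nlinarith

end
end
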